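/- Let E be a product system and u, v units of E. Then there exists a unique complex number c(u,v) such that ⟨u(t), v(t)⟩ = e^{t·c(u,v)} for all t > 0. -/

import Mathlib

local notation "⟪" x ", " y "⟫" => @inner ℂ _ _ x y

open MeasureTheory

/-- A nonvanishing measurable exponential map `ℝ → ℂ` is locally integrable. -/
lemma locallyIntegrable_of_measurable_of_map_add {g : ℝ → ℂ} (hg : Measurable g)
    (hadd : ∀ s t, g (s + t) = g s * g t) (hne : ∀ t, g t ≠ 0) :
    LocallyIntegrable g volume := by
  let L : ℝ →+ ℝ := AddMonoidHom.mk' (fun t => Real.log ‖g t‖) fun s t => by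
    rw [hadd, norm_mul, Real.log_mul (norm_ne_zero_iff.2 (hne s)) (norm_ne_zero_iff.2 (hne t))]
  have hL : Continuous L :=
    Measure.AddMonoidHom.continuous_of_measurable L (Real.measurable_log.comp hg.norm)
  have hnorm : (fun t => ‖g t‖) = fun t => Real.exp (L t) := by
    funext t
    exact (Real.exp_log (norm_pos_iff.2 (hne t))).symm
  have hcont : Continuous fun t => ‖g t‖ := hnorm ▸ Real.continuous_exp.comp hL
  exact hcont.locallyIntegrable.mono hg.aestronglyMeasurable (by simp)

/-- A nonvanishing measurable exponential map `ℝ → ℂ` has the form `t ↦ exp (t * c)`. -/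
lemma exists_eq_exp_of_measurable_of_map_add {g : ℝ → ℂ} (hg : Measurable g)
    (hadd : ∀ s t, g (s + t) = g s * g t) (hne : ∀ t, g t ≠ 0) :
    ∃ c : ℂ, ∀ t : ℝ, g t = Complex.exp (t * c) := by
  have hloc := locallyIntegrable_of_measurable_of_map_add hg hadd hne
  have hint (a b : ℝ) : IntervalIntegrable g volume a b :=
    (hloc.integrableOn_isCompact isCompact_uIcc).intervalIntegrable
  obtain ⟨a, ha⟩ : ∃ a, ∫ t in (0 : ℝ)..a, g t ≠ 0 := by
    by_contra! h
    obtain ⟨x, hx⟩ := (LocallyIntegrable.ae_hasDerivAt_integral hloc).exists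
    have hx0 := hx 0
    simp only [h] at hx0
    exact hne x (hx0.unique (hasDerivAt_const x 0))
  have hformula : g = fun x =>
      ((∫ t in (0 : ℝ)..(x + a), g t) - ∫ t in (0 : ℝ)..x, g t) / ∫ t in (0 : ℝ)..a, g t := by
    funext x
    rw [eq_div_iff ha, intervalIntegral.integral_interval_sub_left (hint _ _) (hint _ _),
      ← intervalIntegral.integral_const_mul]
    simp_rw [← hadd]
    rw [intervalIntegral.integral_comp_add_left (fun t => g t), add_zero]
  have hprim : Continuous fun x => ∫ t in (0 : ℝ)..x, g t :=
    intervalIntegral.continuous_primitive hint 0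
  have hcont : Continuous g := by
    rw [hformula]
    exact ((hprim.comp (continuous_id.add continuous_const)).sub hprim).div_const _
  have hprim' (x : ℝ) : HasDerivAt (fun x => ∫ t in (0 : ℝ)..x, g t) (g x) x :=
    (hcont.integral_hasStrictDerivAt 0 x).hasDerivAt
  obtain ⟨c, hc⟩ : ∃ c, ∀ x, HasDerivAt g (c * g x) x := by
    refine ⟨(g a - 1) / ∫ t in (0 : ℝ)..a, g t, fun x => ?_⟩
    have h := (((hprim' (x + a)).comp_add_const x a).sub (hprim' x)).div_const
      (∫ t in (0 : ℝ)..a, g t)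
    rw [hadd] at h
    have hd : (g x * g a - g x) / (∫ t in (0 : ℝ)..a, g t) =
        (g a - 1) / (∫ t in (0 : ℝ)..a, g t) * g x := by ring
    rw [hd] at h
    exact h.congr_of_eventuallyEq (Filter.Eventually.of_forall (congrFun hformula))
  have hzero : g 0 = 1 := by
    have h := hadd 0 0
    rw [add_zero] at h
    exact (mul_eq_left₀ (hne 0)).1 h.symm
  refine ⟨c, fun t => ?_⟩
  have hexp (x : ℝ) : HasDerivAt (fun y : ℝ => Complex.exp (-(y * c)))
      (Complex.exp (-(x * c)) * -(1 * c)) x :=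
    (((hasDerivAt_id x).ofReal_comp.mul_const c).neg).cexp
  have hderiv (x : ℝ) : HasDerivAt (fun y : ℝ => g y * Complex.exp (-(y * c))) 0 x := by
    refine ((hc x).mul (hexp x)).congr_deriv ?_
    ring
  have hconst := is_const_of_deriv_eq_zero (fun x => (hderiv x).differentiableAt)
    (fun x => (hderiv x).deriv) t 0
  simp only [hzero, Complex.ofReal_zero, zero_mul, neg_zero, Complex.exp_zero, mul_one,
    Complex.exp_neg] at hconst
  exact (mul_inv_eq_one₀ (Complex.exp_ne_zero _)).1 hconst

/-- A nonvanishing measurable exponential map on the positive reals has the form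
`t ↦ exp (t * c)`. -/
lemma exists_eq_exp_of_measurable_of_map_add_of_pos {f : ℝ → ℂ}
    (hf : Measurable fun t : {t : ℝ // 0 < t} => f t)
    (hadd : ∀ s t, 0 < s → 0 < t → f (s + t) = f s * f t) (hne : ∀ t, 0 < t → f t ≠ 0) :
    ∃ c : ℂ, ∀ t : ℝ, 0 < t → f t = Complex.exp (t * c) := by
  have hpos (t : ℝ) : 0 < |t| + 1 := by positivity
  have hpos' (t : ℝ) : 0 < |t| + 1 + t := by linarith [neg_abs_le t]
  let g : ℝ → ℂ := fun t => f (|t| + 1 + t) / f (|t| + 1)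
  have hg (s t : ℝ) (hs : 0 < s) (hst : 0 < s + t) : f (s + t) = f s * g t := by
    have h₁ := hadd (|t| + 1) (s + t) (hpos t) hst
    have h₂ := hadd s (|t| + 1 + t) hs (hpos' t)
    rw [show |t| + 1 + (s + t) = s + (|t| + 1 + t) by ring, h₂] at h₁
    rw [← mul_div_assoc, eq_div_iff (hne _ (hpos t)), h₁, mul_comm]
  have hgne (t : ℝ) : g t ≠ 0 := div_ne_zero (hne _ (hpos' t)) (hne _ (hpos t))
  have hgadd (s t : ℝ) : g (s + t) = g s * g t := by
    have hr : 0 < |s| + |t| + 1 := by positivity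
    have hrs : 0 < |s| + |t| + 1 + s := by linarith [neg_abs_le s, abs_nonneg t]
    have hrst : 0 < |s| + |t| + 1 + s + t := by linarith [neg_abs_le s, neg_abs_le t]
    have h := hg _ t hrs hrst
    rw [hg _ s hr hrs, add_assoc _ s t, hg _ (s + t) hr (by rwa [← add_assoc]), mul_assoc] at h
    exact mul_left_cancel₀ (hne _ hr) h
  have hgmeas : Measurable g := by
    have h₁ : Measurable fun t : ℝ => (⟨|t| + 1 + t, hpos' t⟩ : {t : ℝ // 0 < t}) :=
      Measurable.subtype_mk (by fun_prop)
    have h₂ : Measurable fun t : ℝ => (⟨|t| + 1, hpos t⟩ : {t : ℝ // 0 < t}) :=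
      Measurable.subtype_mk (by fun_prop)
    exact (hf.comp h₁).div (hf.comp h₂)
  obtain ⟨c, hc⟩ := exists_eq_exp_of_measurable_of_map_add hgmeas hgadd hgne
  refine ⟨c, fun t ht => ?_⟩
  rw [← hc t]
  exact mul_left_cancel₀ (hne t ht) ((hadd t t ht ht).symm.trans (hg t t ht (by positivity)))

/-- The exponent `c` is determined by the values of `exp (t * c)` at positive reals `t`. -/
lemma eq_of_forall_pos_exp_mul_eq {c d : ℂ}
    (h : ∀ t : ℝ, 0 < t → Complex.exp (t * c) = Complex.exp (t * d)) : c = d := by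
  have hderiv (z : ℂ) : HasDerivAt (fun t : ℝ => Complex.exp (t * z))
      (Complex.exp ((1 : ℝ) * z) * (1 * z)) 1 :=
    ((hasDerivAt_id (1 : ℝ)).ofReal_comp.mul_const z).cexp
  have hev : (fun t : ℝ => Complex.exp (t * c)) =ᶠ[nhds 1] fun t : ℝ => Complex.exp (t * d) := by
    filter_upwards [lt_mem_nhds one_pos] with t ht using h t ht
  have hcd := (hderiv c).unique ((hderiv d).congr_of_eventuallyEq hev)
  rw [h 1 one_pos, one_mul, one_mul] at hcd
  exact mul_left_cancel₀ (Complex.exp_ne_zero _) hcd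

/-- Let `E` be a product system and `u, v` units of `E`.  Then there
exists a unique complex number `c(u,v)` such that `⟨u(t), v(t)⟩ = e^{t·c(u,v)}` for all
`t > 0`.  A product system is modelled as a family of inner product spaces `E t`
(`t > 0`) with an associative multiplication `mult` satisfying
`⟨xa, yb⟩ = ⟨x,y⟩⟨a,b⟩`; a unit is a multiplicative measurable section, for which the
function `t ↦ ⟨u(t),v(t)⟩` is measurable and never zero. -/
theorem stmt10 (E : ℝ → Type*)
    [∀ t, NormedAddCommGroup (E t)] [∀ t, InnerProductSpace ℂ (E t)]
    (mult : ∀ s t : ℝ, E s → E t → E (s + t))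
    (hmult_assoc : ∀ (r s t : ℝ) (x : E r) (y : E s) (z : E t),
      HEq (mult (r + s) t (mult r s x y) z) (mult r (s + t) x (mult s t y z)))
    (hinner : ∀ (s t : ℝ), 0 < s → 0 < t → ∀ (x y : E s) (a b : E t),
      ⟪mult s t x a, mult s t y b⟫ = ⟪x, y⟫ * ⟪a, b⟫)
    (u v : ∀ t : ℝ, E t)
    (hu : ∀ s t : ℝ, 0 < s → 0 < t → u (s + t) = mult s t (u s) (u t))
    (hv : ∀ s t : ℝ, 0 < s → 0 < t → v (s + t) = mult s t (v s) (v t))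
    (hu0 : ∀ t : ℝ, 0 < t → u t ≠ 0)
    (hv0 : ∀ t : ℝ, 0 < t → v t ≠ 0)
    (hmeas : Measurable fun t : {t : ℝ // 0 < t} => ⟪u t.1, v t.1⟫)
    (hne : ∀ t : ℝ, 0 < t → ⟪u t, v t⟫ ≠ 0) :
    ∃! c : ℂ, ∀ t : ℝ, 0 < t → ⟪u t, v t⟫ = Complex.exp (t * c) := by
  obtain ⟨c, hc⟩ := exists_eq_exp_of_measurable_of_map_add_of_pos
    (f := fun t => ⟪u t, v t⟫) hmeas
    (fun s t hs ht => by simp only [hu s t hs ht, hv s t hs ht, hinner s t hs ht]) hne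
  exact ⟨c, hc, fun d hd => eq_of_forall_pos_exp_mul_eq fun t ht =>
    (hd t ht).symm.trans (hc t ht)⟩
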